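/- Additive-noise special case: let X and Z₂ be independent real random variables on a probability space (Ω, μ), with X SαS(α, γ_X) and Z₂ SαS(α, γ_{Z₂}), γ_X, γ_{Z₂} > 0, α ∈ (0,2), and let Y = a₂₁X + a₂₂Z₂ with a₂₁ ≠ 0 and a₂₂ ≠ 0. Then for (μ.map Y)-almost every y ∈ ℝ, the identity function is integrable with respect to condDistrib X Y μ y and ∫ x d(condDistrib X Y μ y)(x) = (γ_X^α|a₂₁|^α / (γ_X^α|a₂₁|^α + γ_{Z₂}^α|a₂₂|^α)) · (y/a₂₁). -/

import Mathlib

open MeasureTheory ProbabilityTheory Real Set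

/-!
Let `U`, `V` be independent with characteristic functions `φ`, `ψ`. Formally
`𝔼[U exp (it(U + V))] = -i φ'(t) ψ(t)`, so `φ' ψ = c (φ ψ)'` says exactly that
`𝔼[U | U + V = y] = c y`; for `φ = exp (-s|t|^α)` and `ψ = exp (-s'|t|^α)` this holds with
`c = s / (s + s')`.

If `α ≤ 1`, then `U` is not integrable and `φ` is not differentiable at `0`. However, `φ` is
absolutely continuous with integrable derivative, so that for smooth compactly supported `g = 𝓕 h`
an integration by parts gives `∫ u g(u + v) dν(u) = -i 𝓕 (h φ'(-2π ·))(v)`, with `ν` the law of `U`.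
The right-hand side is bounded uniformly in `v`. As `|u| ≤ 2|u + v| - sign(v) u`, it follows that
`U` is integrable on `{U + V ∈ K}` for compact `K`, and then the formal computation can be carried
out by testing against such `g`.
-/

open Filter Topology
open scoped FourierTransform SchwartzMap

/-- `f` is absolutely continuous on the whole line with integrable derivative `f'`. The derivative
may fail on a countable set, because the characteristic function of a stable law of index `α ≤ 1`
is not differentiable at `0`. -/
structure HasIntegrableDeriv {E : Type*} [NormedAddCommGroup E] [NormedSpace ℝ E] (f f' : ℝ → E) :
    Prop where
  continuous : Continuous f
  integrable : Integrable f'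
  hasDerivAt_off_countable : ∃ S : Set ℝ, S.Countable ∧ ∀ t ∉ S, HasDerivAt f (f' t) t

namespace HasIntegrableDeriv

section NormedSpace

variable {E : Type*} [NormedAddCommGroup E] [NormedSpace ℝ E] {f f' : ℝ → E}

lemma of_differentiable (hf : Differentiable ℝ f) (hf' : Integrable (deriv f)) :
    HasIntegrableDeriv f (deriv f) :=
  ⟨hf.continuous, hf', ∅, countable_empty, fun t _ ↦ (hf t).hasDerivAt⟩

lemma comp_mul_left (hf : HasIntegrableDeriv f f') {c : ℝ} (hc : c ≠ 0) :
    HasIntegrableDeriv (fun t ↦ f (c * t)) (fun t ↦ c • f' (c * t)) where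
  continuous := hf.continuous.comp (continuous_const_mul c)
  integrable := (hf.integrable.comp_mul_left' hc).smul c
  hasDerivAt_off_countable := by
    obtain ⟨S, hS, hderiv⟩ := hf.hasDerivAt_off_countable
    refine ⟨(c * ·) ⁻¹' S, hS.preimage (mul_right_injective₀ hc), fun t ht ↦ ?_⟩
    simpa [Function.comp_def] using!
      (hderiv (c * t) ht).scomp t ((hasDerivAt_id t).const_mul c)

variable [CompleteSpace E]

lemma intervalIntegral_eq_sub (hf : HasIntegrableDeriv f f') (a b : ℝ) :
    ∫ t in a..b, f' t = f b - f a := by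
  obtain ⟨S, hS, hderiv⟩ := hf.hasDerivAt_off_countable
  exact integral_eq_of_hasDerivAt_off_countable f f' hS hf.continuous.continuousOn
    (fun t ht ↦ hderiv t ht.2) hf.integrable.intervalIntegrable

lemma exists_norm_le (hf : HasIntegrableDeriv f f') : ∃ C, ∀ t, ‖f t‖ ≤ C := by
  refine ⟨(∫ t, ‖f' t‖) + ‖f 0‖, fun t ↦ ?_⟩
  have hsub : ‖f t - f 0‖ ≤ ∫ t, ‖f' t‖ := by
    rw [← hf.intervalIntegral_eq_sub]
    exact (intervalIntegral.norm_integral_le_integral_norm_uIoc).trans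
      (setIntegral_le_integral hf.integrable.norm (ae_of_all _ fun _ ↦ norm_nonneg _))
  linarith [norm_le_norm_sub_add (f t) (f 0)]

lemma integral_eq_zero (hf : HasIntegrableDeriv f f') (hf_int : Integrable f) :
    ∫ t, f' t = 0 := by
  have hlim : Tendsto (fun t ↦ f t - f (-t)) atTop (𝓝 (∫ t, f' t)) := by
    simp_rw [← hf.intervalIntegral_eq_sub]
    exact intervalIntegral_tendsto_integral hf.integrable tendsto_neg_atTop_atBot tendsto_id
  refine IntegrableAtFilter.eq_zero_of_tendsto
    ((hf_int.sub hf_int.comp_neg).integrableAtFilter atTop) (fun s hs ↦ ?_) hlim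
  obtain ⟨a, ha⟩ := mem_atTop_sets.1 hs
  exact measure_mono_top ha volume_Ici

end NormedSpace

section NormedCommRing

variable {A : Type*} [NormedCommRing A] [NormedAlgebra ℝ A] [CompleteSpace A] {f f' g g' : ℝ → A}

lemma integrable_mul (hf : HasIntegrableDeriv f f') (hg : Integrable g) :
    Integrable (fun t ↦ f t * g t) :=
  have ⟨_, hC⟩ := hf.exists_norm_le
  hg.bdd_mul hf.continuous.aestronglyMeasurable (ae_of_all _ hC)

lemma mul (hf : HasIntegrableDeriv f f') (hg : HasIntegrableDeriv g g') :
    HasIntegrableDeriv (fun t ↦ f t * g t) (fun t ↦ f' t * g t + f t * g' t) where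
  continuous := hf.continuous.mul hg.continuous
  integrable := by
    simpa only [mul_comm (g _)] using!
      (hg.integrable_mul hf.integrable).add (hf.integrable_mul hg.integrable)
  hasDerivAt_off_countable := by
    obtain ⟨S, hS, hf'⟩ := hf.hasDerivAt_off_countable
    obtain ⟨T, hT, hg'⟩ := hg.hasDerivAt_off_countable
    refine ⟨S ∪ T, hS.union hT, fun t ht ↦ ?_⟩
    rw [mem_union, not_or] at ht
    exact (hf' t ht.1).mul (hg' t ht.2)

lemma integral_mul_eq_neg_integral_mul (hf : HasIntegrableDeriv f f')
    (hg : HasIntegrableDeriv g g') (hfg : Integrable (fun t ↦ f t * g t)) :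
    ∫ t, f' t * g t = -∫ t, f t * g' t := by
  rw [eq_neg_iff_add_eq_zero, ← integral_add _ (hf.integrable_mul hg.integrable),
    (hf.mul hg).integral_eq_zero hfg]
  simpa only [mul_comm (g _)] using hg.integrable_mul hf.integrable

end NormedCommRing

end HasIntegrableDeriv

lemma integral_fourier_eq_integral_mul_charFun {V : Type*} [NormedAddCommGroup V]
    [InnerProductSpace ℝ V] [FiniteDimensional ℝ V] [MeasurableSpace V] [BorelSpace V]
    (ν : Measure V) [IsFiniteMeasure ν] {h : V → ℂ} (hh : Integrable h) :
    ∫ x, 𝓕 h x ∂ν = ∫ t, h t * charFun ν ((-(2 * π)) • t) := by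
  have hν : ∀ t : V, charFun ν ((-(2 * π)) • t)
      = VectorFourier.fourierIntegral fourierChar ν (innerₗ V) 1 t := fun t ↦ by
    rw [charFun_eq_fourierIntegral', smul_smul, neg_mul_neg, inv_mul_cancel₀ two_pi_pos.ne',
      one_smul]
  simp_rw [hν]
  simpa [flip_innerₗ] using! VectorFourier.integral_fourierIntegral_smul_eq_flip (μ := volume)
    (L := innerₗ V) (g := (1 : V → ℂ)) continuous_fourierChar continuous_inner hh
    (integrable_const (1 : ℂ) : Integrable _ ν)

lemma integral_mul_fourier_eq {ν : Measure ℝ} [IsFiniteMeasure ν] {φ' : ℝ → ℂ}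
    (hν : HasIntegrableDeriv (charFun ν) φ') {h : ℝ → ℂ} (hh : Integrable h)
    (hd : Differentiable ℝ h) (hh' : Integrable (deriv h)) :
    ∫ x, x * 𝓕 h x ∂ν = -Complex.I * ∫ t, h t * φ' (-(2 * π) * t) := by
  have hc : -(2 * π) ≠ 0 := neg_ne_zero.2 two_pi_pos.ne'
  have hpi : (π : ℂ) ≠ 0 := mod_cast pi_ne_zero
  have hφ := hν.comp_mul_left hc
  calc ∫ x, x * 𝓕 h x ∂ν
      = ∫ x, (2 * π * Complex.I)⁻¹ * 𝓕 (deriv h) x ∂ν := by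
        simp_rw [Real.fourier_deriv hh hd hh']
        congr with x
        rw [smul_eq_mul, ← mul_assoc]
        congr 1
        field_simp [Complex.I_ne_zero]
    _ = (2 * π * Complex.I)⁻¹ * ∫ t, deriv h t * charFun ν (-(2 * π) * t) := by
        rw [integral_const_mul, integral_fourier_eq_integral_mul_charFun ν hh']
        simp only [smul_eq_mul]
    _ = -(2 * π * Complex.I)⁻¹ * ∫ t, h t * ((-(2 * π) : ℝ) • φ' (-(2 * π) * t)) := by
        rw [(HasIntegrableDeriv.of_differentiable hd hh').integral_mul_eq_neg_integral_mul hφ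
          (by simpa only [mul_comm] using hφ.integrable_mul hh)]
        ring
    _ = -Complex.I * ∫ t, h t * φ' (-(2 * π) * t) := by
        simp_rw [Complex.real_smul, mul_left_comm (h _), integral_const_mul]
        push_cast
        field_simp
        simp

lemma fourier_fourierChar_smul {V E : Type*} [NormedAddCommGroup V] [InnerProductSpace ℝ V]
    [FiniteDimensional ℝ V] [MeasurableSpace V] [BorelSpace V] [NormedAddCommGroup E]
    [NormedSpace ℂ E] (h : V → E) (v x : V) :
    𝓕 (fun t ↦ fourierChar (-inner ℝ t v) • h t) x = 𝓕 h (x + v) := by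
  simp_rw [Real.fourier_eq, smul_smul, ← AddChar.map_add_eq_mul, inner_add_right, neg_add]

lemma hasDerivAt_fourierChar_smul {h : ℝ → ℂ} {h' : ℂ} {t : ℝ} (hh : HasDerivAt h h' t) (v : ℝ) :
    HasDerivAt (fun t ↦ fourierChar (-inner ℝ t v) • h t)
      (fourierChar (-inner ℝ t v) • (h' - 2 * π * Complex.I * v * h t)) t := by
  have hexp : HasDerivAt (fun t : ℝ ↦ (fourierChar (-inner ℝ t v) : ℂ))
      (-v * (2 * π * Complex.I * fourierChar (-inner ℝ t v))) t := by
    simpa [Function.comp_def] using! (Real.hasDerivAt_fourierChar _).scomp t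
      (((hasDerivAt_id t).const_mul v).neg)
  refine (hexp.mul hh).congr_deriv ?_
  rw [Circle.smul_def, smul_eq_mul]
  ring

lemma integral_mul_fourier_add_eq {ν : Measure ℝ} [IsFiniteMeasure ν] {φ' : ℝ → ℂ}
    (hν : HasIntegrableDeriv (charFun ν) φ') {h : ℝ → ℂ} (hh : Integrable h)
    (hd : Differentiable ℝ h) (hh' : Integrable (deriv h)) (v : ℝ) :
    ∫ x, x * 𝓕 h (x + v) ∂ν = -Complex.I * 𝓕 (fun t ↦ h t * φ' (-(2 * π) * t)) v := by
  have hderiv := fun t ↦ hasDerivAt_fourierChar_smul (hd t).hasDerivAt v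
  have hphase {f : ℝ → ℂ} (hf : Integrable f) :
      Integrable (fun t ↦ fourierChar (-inner ℝ t v) • f t) :=
    (Real.fourierIntegral_convergent_iff v).2 hf
  simp_rw [← fourier_fourierChar_smul h v]
  rw [integral_mul_fourier_eq hν (hphase hh) (fun t ↦ (hderiv t).differentiableAt)
    (by rw [deriv_eq hderiv]; exact hphase (hh'.sub (hh.const_mul _))), Real.fourier_eq]
  simp_rw [smul_mul_assoc]

lemma exists_schwartzMap_fourier_eq_ofReal {g : ℝ → ℝ} (hg : ContDiff ℝ (⊤ : ℕ∞) g)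
    (hgc : HasCompactSupport g) : ∃ h : 𝓢(ℝ, ℂ), ∀ x, 𝓕 (h : ℝ → ℂ) x = g x := by
  have hGc : HasCompactSupport (fun x ↦ (g x : ℂ)) := hgc.comp_left Complex.ofReal_zero
  let G : 𝓢(ℝ, ℂ) := hGc.toSchwartzMap (Complex.ofRealCLM.contDiff.comp hg)
  refine ⟨𝓕⁻ G, fun x ↦ ?_⟩
  rw [← SchwartzMap.fourier_coe, FourierTransform.fourier_fourierInv_eq]
  rfl

lemma abs_le_two_mul_abs_add_sub_sign_mul (u v : ℝ) : |u| ≤ 2 * |u + v| - SignType.sign v * u := by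
  rcases lt_trichotomy v 0 with hv | rfl | hv
  · rw [sign_neg hv, SignType.coe_neg_one]
    cases abs_cases u <;> cases abs_cases (u + v) <;> linarith
  · simpa using (le_mul_of_one_le_left (abs_nonneg u) one_le_two : |u| ≤ 2 * |u|)
  · rw [sign_pos hv, SignType.coe_one]
    cases abs_cases u <;> cases abs_cases (u + v) <;> linarith

lemma exists_abs_integral_mul_comp_add_le {ν : Measure ℝ} [IsFiniteMeasure ν] {φ' : ℝ → ℂ}
    (hν : HasIntegrableDeriv (charFun ν) φ') {g : ℝ → ℝ} (hg : ContDiff ℝ (⊤ : ℕ∞) g)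
    (hgc : HasCompactSupport g) : ∃ C, ∀ v, |∫ x, x * g (x + v) ∂ν| ≤ C := by
  obtain ⟨h, hh⟩ := exists_schwartzMap_fourier_eq_ofReal hg hgc
  refine ⟨∫ t, ‖h t * φ' (-(2 * π) * t)‖, fun v ↦ ?_⟩
  have hC : ((∫ x, x * g (x + v) ∂ν : ℝ) : ℂ)
      = -Complex.I * 𝓕 (fun t ↦ h t * φ' (-(2 * π) * t)) v := by
    rw [← integral_mul_fourier_add_eq hν h.integrable h.differentiable
      (SchwartzMap.derivCLM ℝ ℂ h).integrable, ← integral_complex_ofReal]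
    simp_rw [Complex.ofReal_mul, hh]
  rw [← norm_eq_abs, ← Complex.norm_real, hC, norm_mul, norm_neg, Complex.norm_I, one_mul]
  exact VectorFourier.norm_fourierIntegral_le_integral_norm ..

lemma integrable_mul_comp_add {ν : Measure ℝ} [IsFiniteMeasureOnCompacts ν] {g : ℝ → ℝ}
    (hg : Continuous g) (hgc : HasCompactSupport g) (v : ℝ) :
    Integrable (fun x ↦ x * g (x + v)) ν :=
  Continuous.integrable_of_hasCompactSupport (by fun_prop)
    (hgc.comp_homeomorph (Homeomorph.addRight v)).mul_left

lemma exists_integral_abs_mul_comp_add_le {ν : Measure ℝ} [IsFiniteMeasure ν] {φ' : ℝ → ℂ}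
    (hν : HasIntegrableDeriv (charFun ν) φ') {g : ℝ → ℝ} (hg : ContDiff ℝ (⊤ : ℕ∞) g)
    (hgc : HasCompactSupport g) (hg0 : ∀ x, 0 ≤ g x) :
    ∃ C, ∀ v, ∫ x, |x * g (x + v)| ∂ν ≤ C := by
  obtain ⟨M, hM⟩ := (continuous_id.mul hg.continuous).bounded_above_of_compact_support hgc.mul_left
  obtain ⟨C, hC⟩ := exists_abs_integral_mul_comp_add_le hν hg hgc
  refine ⟨2 * M * ν.real univ + C, fun v ↦ ?_⟩
  have hint := integrable_mul_comp_add (ν := ν) hg.continuous hgc v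
  have hpt : ∀ x, |x * g (x + v)| ≤ 2 * M - SignType.sign v * (x * g (x + v)) := fun x ↦ by
    have hMx : |x + v| * g (x + v) ≤ M := by
      simpa [abs_mul, abs_of_nonneg (hg0 _)] using hM (x + v)
    rw [abs_mul, abs_of_nonneg (hg0 _)]
    linarith [mul_le_mul_of_nonneg_right (abs_le_two_mul_abs_add_sub_sign_mul x v) (hg0 (x + v))]
  have hsign : -(SignType.sign v * ∫ x, x * g (x + v) ∂ν) ≤ C := by
    refine (neg_le_abs _).trans ?_
    rw [abs_mul]
    refine (mul_le_of_le_one_left (abs_nonneg _) ?_).trans (hC v)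
    cases SignType.sign v <;> simp
  calc ∫ x, |x * g (x + v)| ∂ν
      ≤ ∫ x, (2 * M - SignType.sign v * (x * g (x + v))) ∂ν :=
        integral_mono hint.abs ((integrable_const _).sub (hint.const_mul _)) hpt
    _ = 2 * M * ν.real univ - SignType.sign v * ∫ x, x * g (x + v) ∂ν := by
        rw [integral_sub (integrable_const _) (hint.const_mul _), integral_const,
          integral_const_mul, smul_eq_mul, mul_comm (2 * M)]
    _ ≤ 2 * M * ν.real univ + C := by linarith

lemma integrable_fst_mul_comp_add {ν ν' : Measure ℝ} [IsFiniteMeasure ν] [IsFiniteMeasure ν']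
    {φ' : ℝ → ℂ} (hν : HasIntegrableDeriv (charFun ν) φ') {g : ℝ → ℝ}
    (hg : ContDiff ℝ (⊤ : ℕ∞) g) (hgc : HasCompactSupport g) (hg0 : ∀ x, 0 ≤ g x) :
    Integrable (fun p : ℝ × ℝ ↦ p.1 * g (p.1 + p.2)) (ν.prod ν') := by
  obtain ⟨C, hC⟩ := exists_integral_abs_mul_comp_add_le hν hg hgc hg0
  have hmeas : StronglyMeasurable (fun p : ℝ × ℝ ↦ p.1 * g (p.1 + p.2)) :=
    Continuous.stronglyMeasurable (by have := hg.continuous; fun_prop)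
  refine (integrable_prod_iff' hmeas.aestronglyMeasurable).2
    ⟨ae_of_all _ (integrable_mul_comp_add hg.continuous hgc), .of_bound (C := C) ?_ ?_⟩
  · exact hmeas.norm.integral_prod_left'.aestronglyMeasurable
  · refine ae_of_all _ fun v ↦ ?_
    rw [norm_of_nonneg (by positivity)]
    exact hC v

lemma integrableOn_fst_preimage_add {ν ν' : Measure ℝ} [IsFiniteMeasure ν] [IsFiniteMeasure ν']
    {φ' : ℝ → ℂ} (hν : HasIntegrableDeriv (charFun ν) φ') {K : Set ℝ} (hK : IsCompact K) :
    IntegrableOn Prod.fst ((fun p : ℝ × ℝ ↦ p.1 + p.2) ⁻¹' K) (ν.prod ν') := by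
  obtain ⟨R, hR0, hKR⟩ := hK.isBounded.subset_closedBall_lt 0 0
  let g : ContDiffBump (0 : ℝ) := ⟨R, R + 1, hR0, lt_add_one R⟩
  have hint : Integrable (fun p : ℝ × ℝ ↦ p.1 * g (p.1 + p.2)) (ν.prod ν') :=
    integrable_fst_mul_comp_add hν g.contDiff g.hasCompactSupport fun _ ↦ g.nonneg
  refine (hint.integrableOn (s := _ ⁻¹' K)).congr_fun (fun p hp ↦ ?_)
    (hK.measurableSet.preimage (by fun_prop))
  simp [g.one_of_mem_closedBall (hKR hp)]

lemma integral_fst_mul_comp_add_eq {ν ν' : Measure ℝ} [IsFiniteMeasure ν] [IsFiniteMeasure ν']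
    {φ' θ' : ℝ → ℂ} (hν : HasIntegrableDeriv (charFun ν) φ')
    (hconv : HasIntegrableDeriv (charFun (ν ∗ ν')) θ') {c : ℝ}
    (hc : ∀ t, φ' t * charFun ν' t = c * θ' t) {g : ℝ → ℝ} (hg : ContDiff ℝ (⊤ : ℕ∞) g)
    (hgc : HasCompactSupport g)
    (hint : Integrable (fun p : ℝ × ℝ ↦ p.1 * g (p.1 + p.2)) (ν.prod ν')) :
    ∫ p, p.1 * g (p.1 + p.2) ∂ν.prod ν' = c * ∫ y, y * g y ∂(ν ∗ ν') := by
  obtain ⟨h, hh⟩ := exists_schwartzMap_fourier_eq_ofReal hg hgc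
  have hderiv : Integrable (deriv h) := (SchwartzMap.derivCLM ℝ ℂ h).integrable
  have hh' := HasIntegrableDeriv.of_differentiable h.differentiable hderiv
  have hφ' := hh'.integrable_mul (hν.integrable.comp_mul_left' (neg_ne_zero.2 two_pi_pos.ne'))
  suffices ((∫ p, p.1 * g (p.1 + p.2) ∂ν.prod ν' : ℝ) : ℂ) = (c * ∫ y, y * g y ∂(ν ∗ ν') : ℝ) from
    mod_cast this
  calc ((∫ p, p.1 * g (p.1 + p.2) ∂ν.prod ν' : ℝ) : ℂ)
      = ∫ v, ∫ x, x * 𝓕 (h : ℝ → ℂ) (x + v) ∂ν ∂ν' := by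
        rw [integral_prod_symm _ hint, ← integral_complex_ofReal]
        simp_rw [← integral_complex_ofReal, Complex.ofReal_mul, hh]
    _ = -Complex.I * ∫ v, 𝓕 (fun t ↦ h t * φ' (-(2 * π) * t)) v ∂ν' := by
        simp_rw [integral_mul_fourier_add_eq hν h.integrable h.differentiable hderiv,
          integral_const_mul]
    _ = -Complex.I * ∫ t, h t * (c * θ' (-(2 * π) * t)) := by
        rw [integral_fourier_eq_integral_mul_charFun ν' hφ']
        simp_rw [← hc, mul_assoc, smul_eq_mul]
    _ = c * ∫ y, y * 𝓕 (h : ℝ → ℂ) y ∂(ν ∗ ν') := by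
        rw [integral_mul_fourier_eq hconv h.integrable h.differentiable hderiv]
        simp_rw [mul_left_comm (h _), integral_const_mul, mul_left_comm (c : ℂ)]
    _ = (c * ∫ y, y * g y ∂(ν ∗ ν') : ℝ) := by
        simp_rw [Complex.ofReal_mul, ← integral_complex_ofReal, Complex.ofReal_mul, hh]

section CondDistrib

variable {Ω E F : Type*} [MeasurableSpace Ω] {μ : Measure Ω} [NormedAddCommGroup E]
  [NormedSpace ℝ E] [MeasurableSpace F] {X : Ω → E} {Y : Ω → F}

lemma integrable_comp_smul_of_hasCompactSupport [TopologicalSpace F]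
    [OpensMeasurableSpace F] (hY : Measurable Y)
    (hXY : ∀ K, IsCompact K → IntegrableOn X (Y ⁻¹' K) μ) {g : F → ℝ} (hg : Continuous g)
    (hgc : HasCompactSupport g) : Integrable (fun ω ↦ g (Y ω) • X ω) μ := by
  obtain ⟨C, hC⟩ := hg.bounded_above_of_compact_support hgc
  have hint : IntegrableOn (fun ω ↦ g (Y ω) • X ω) (Y ⁻¹' tsupport g) μ :=
    (hXY _ hgc).bdd_smul C (hg.measurable.comp hY).aestronglyMeasurable
      (ae_of_all _ fun ω ↦ hC (Y ω))
  refine (integrableOn_iff_integrable_of_support_subset fun ω hω ↦ ?_).1 hint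
  exact subset_tsupport g (left_ne_zero_of_smul hω)

lemma integrable_indicator_smul [TopologicalSpace F] [OpensMeasurableSpace F]
    [T2Space F] (hY : Measurable Y)
    (hXY : ∀ K, IsCompact K → IntegrableOn X (Y ⁻¹' K) μ) {K : Set F} (hK : IsCompact K) :
    Integrable (fun ω ↦ K.indicator (1 : F → ℝ) (Y ω) • X ω) μ := by
  refine ((hXY K hK).integrable_indicator (hK.measurableSet.preimage hY)).congr
    (ae_of_all _ fun ω ↦ ?_)
  by_cases hω : Y ω ∈ K <;> simp [hω]

variable [SecondCountableTopology E] [MeasurableSpace E] [BorelSpace E]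

lemma integrable_smul_map_prodMk (hX : Measurable X) (hY : Measurable Y) {g : F → ℝ}
    (hg : Measurable g) (hgX : Integrable (fun ω ↦ g (Y ω) • X ω) μ) :
    Integrable (fun p : F × E ↦ g p.1 • p.2) (μ.map fun ω ↦ (Y ω, X ω)) :=
  (integrable_map_measure (by fun_prop) (by fun_prop)).2 hgX

variable [CompleteSpace E] [IsFiniteMeasure μ]

lemma integral_smul_integral_condDistrib (hX : Measurable X) (hY : Measurable Y) {g : F → ℝ}
    (hg : Measurable g) (hgX : Integrable (fun ω ↦ g (Y ω) • X ω) μ) :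
    ∫ y, g y • ∫ x, x ∂condDistrib X Y μ y ∂μ.map Y = ∫ ω, g (Y ω) • X ω ∂μ := by
  have hint := integrable_smul_map_prodMk hX hY hg hgX
  calc ∫ y, g y • ∫ x, x ∂condDistrib X Y μ y ∂μ.map Y
      = ∫ p : F × E, g p.1 • p.2 ∂(μ.map Y ⊗ₘ condDistrib X Y μ) := by
        rw [Measure.integral_compProd (by rwa [compProd_map_condDistrib hX.aemeasurable])]
        exact integral_congr_ae (ae_of_all _ fun y ↦ (integral_smul _ _).symm)
    _ = ∫ ω, g (Y ω) • X ω ∂μ := by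
        rw [compProd_map_condDistrib hX.aemeasurable,
          integral_map (by fun_prop) hint.aestronglyMeasurable]

lemma ae_integrable_condDistrib [TopologicalSpace F] [OpensMeasurableSpace F]
    [T2Space F] [SigmaCompactSpace F] (hX : Measurable X) (hY : Measurable Y)
    (hXY : ∀ K, IsCompact K → IntegrableOn X (Y ⁻¹' K) μ) :
    ∀ᵐ y ∂μ.map Y, Integrable (fun x ↦ x) (condDistrib X Y μ y) := by
  have hcover : ∀ᵐ y ∂μ.map Y, ∀ n, Integrable
      (fun x ↦ (compactCovering F n).indicator (1 : F → ℝ) y • x) (condDistrib X Y μ y) :=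
    ae_all_iff.2 fun n ↦
      have hK := isCompact_compactCovering F n
      (integrable_smul_map_prodMk hX hY (measurable_one.indicator hK.measurableSet)
        (integrable_indicator_smul hY hXY hK)).condDistrib_ae_map hX.aemeasurable
  filter_upwards [hcover] with y hy
  obtain ⟨n, hn⟩ := exists_mem_compactCovering y
  simpa [hn] using hy n

lemma locallyIntegrable_integral_condDistrib [TopologicalSpace F] [OpensMeasurableSpace F]
    [T2Space F] [LocallyCompactSpace F] (hX : Measurable X) (hY : Measurable Y)
    (hXY : ∀ K, IsCompact K → IntegrableOn X (Y ⁻¹' K) μ) :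
    LocallyIntegrable (fun y ↦ ∫ x, x ∂condDistrib X Y μ y) (μ.map Y) := by
  refine locallyIntegrable_iff.2 fun K hK ↦ ?_
  rw [← integrable_indicator_iff hK.measurableSet]
  refine (integrable_smul_map_prodMk hX hY (measurable_one.indicator hK.measurableSet)
    (integrable_indicator_smul hY hXY hK)).integral_condDistrib_map hX.aemeasurable |>.congr
      (ae_of_all _ fun y ↦ ?_)
  by_cases hy : y ∈ K <;> simp [hy]

lemma integral_condDistrib_ae_eq [NormedAddCommGroup F] [NormedSpace ℝ F]
    [FiniteDimensional ℝ F] [BorelSpace F] (hX : Measurable X) (hY : Measurable Y)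
    (hXY : ∀ K, IsCompact K → IntegrableOn X (Y ⁻¹' K) μ) {m : F → E}
    (hm : LocallyIntegrable m (μ.map Y))
    (hmX : ∀ g : F → ℝ, ContDiff ℝ (⊤ : ℕ∞) g → HasCompactSupport g →
      ∫ ω, g (Y ω) • X ω ∂μ = ∫ y, g y • m y ∂μ.map Y) :
    ∀ᵐ y ∂μ.map Y, ∫ x, x ∂condDistrib X Y μ y = m y := by
  have : ProperSpace F := FiniteDimensional.proper_real F
  refine ae_eq_of_integral_contDiff_smul_eq (locallyIntegrable_integral_condDistrib hX hY hXY) hm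
    fun g hg hgc ↦ ?_
  rw [integral_smul_integral_condDistrib hX hY hg.continuous.measurable
    (integrable_comp_smul_of_hasCompactSupport hY hXY hg.continuous hgc), hmX g hg hgc]

end CondDistrib

section Indep

variable {Ω : Type*} [MeasurableSpace Ω] {μ : Measure Ω} [IsFiniteMeasure μ] {U V : Ω → ℝ}
  {φ' : ℝ → ℂ}

lemma integrableOn_preimage_add_of_indepFun (hU : Measurable U) (hV : Measurable V)
    (hUV : IndepFun U V μ) (hφ : HasIntegrableDeriv (charFun (μ.map U)) φ') {K : Set ℝ}
    (hK : IsCompact K) : IntegrableOn U ((fun ω ↦ U ω + V ω) ⁻¹' K) μ := by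
  have hint := integrableOn_fst_preimage_add (ν' := μ.map V) hφ hK
  rw [← (indepFun_iff_map_prod_eq_prod_map_map hU.aemeasurable hV.aemeasurable).1 hUV] at hint
  rw [IntegrableOn, Measure.restrict_map (by fun_prop) (hK.measurableSet.preimage (by fun_prop))]
    at hint
  exact hint.comp_measurable (by fun_prop)

theorem integral_condDistrib_add_eq_mul (hU : Measurable U) (hV : Measurable V)
    (hUV : IndepFun U V μ) (hφ : HasIntegrableDeriv (charFun (μ.map U)) φ') {θ' : ℝ → ℂ}
    (hθ : HasIntegrableDeriv (charFun (μ.map (U + V))) θ') {c : ℝ}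
    (hc : ∀ t, φ' t * charFun (μ.map V) t = c * θ' t) :
    ∀ᵐ y ∂μ.map (U + V), ∫ x, x ∂condDistrib U (U + V) μ y = c * y := by
  have hloc := fun K (hK : IsCompact K) ↦ integrableOn_preimage_add_of_indepFun hU hV hUV hφ hK
  refine integral_condDistrib_ae_eq hU (hU.add hV) hloc
    (continuous_const_mul c).locallyIntegrable fun g hg hgc ↦ ?_
  have hprod := (indepFun_iff_map_prod_eq_prod_map_map hU.aemeasurable hV.aemeasurable).1 hUV
  have hsum := hUV.map_add_eq_map_conv_map₀ hU.aemeasurable hV.aemeasurable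
  have hmeas : StronglyMeasurable (fun p : ℝ × ℝ ↦ p.1 * g (p.1 + p.2)) :=
    Continuous.stronglyMeasurable (by have := hg.continuous; fun_prop)
  have hint : Integrable (fun p : ℝ × ℝ ↦ p.1 * g (p.1 + p.2)) ((μ.map U).prod (μ.map V)) := by
    rw [← hprod, integrable_map_measure hmeas.aestronglyMeasurable (by fun_prop)]
    simpa only [smul_eq_mul, mul_comm] using!
      integrable_comp_smul_of_hasCompactSupport (hU.add hV) hloc hg.continuous hgc
  calc ∫ ω, g ((U + V) ω) • U ω ∂μ
      = ∫ p, p.1 * g (p.1 + p.2) ∂(μ.map U).prod (μ.map V) := by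
        rw [← hprod, integral_map (by fun_prop) hmeas.aestronglyMeasurable]
        simp_rw [smul_eq_mul, mul_comm (g _), Pi.add_apply]
    _ = c * ∫ y, y * g y ∂μ.map (U + V) := by
        rw [integral_fst_mul_comp_add_eq hφ (hsum ▸ hθ) hc hg hgc hint, hsum]
    _ = ∫ y, g y • (c * y) ∂μ.map (U + V) := by
        rw [← integral_const_mul]
        congr with y
        rw [smul_eq_mul]
        ring

end Indep

/-- `ν` is the symmetric `α`-stable law of dispersion `γ`, parametrized by `s = γ ^ α` rather than
`γ` because `s` is additive under convolution. -/
def IsSymmetricStable (ν : Measure ℝ) (α s : ℝ) : Prop :=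
  ∀ t, charFun ν t = Complex.exp (-(s * |t| ^ α : ℝ))

lemma integrable_comp_abs {E : Type*} [NormedAddCommGroup E] {f : ℝ → E}
    (hf : IntegrableOn f (Ioi 0)) : Integrable (fun t ↦ f |t|) := by
  have hpos : IntegrableOn (fun t ↦ f |t|) (Ioi 0) :=
    hf.congr_fun (fun t ht ↦ by rw [abs_of_pos ht]) measurableSet_Ioi
  rw [← integrableOn_univ, ← Iic_union_Ioi (a := (0 : ℝ)), integrableOn_union]
  refine ⟨?_, hpos⟩
  simpa using! ((integrableOn_Ici_iff_integrableOn_Ioi (μ := volume) (by simp)).2 hpos).comp_neg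

lemma integrable_abs_rpow_mul_exp_neg_mul_abs_rpow {α s : ℝ} (hα : 0 < α) (hs : 0 < s) :
    Integrable (fun t : ℝ ↦ |t| ^ (α - 1) * exp (-(s * |t| ^ α))) := by
  refine integrable_comp_abs (f := fun t ↦ t ^ (α - 1) * exp (-(s * t ^ α))) ?_
  simpa only [neg_mul] using
    integrableOn_rpow_mul_exp_neg_mul_rpow (by linarith : -1 < α - 1) hα hs

lemma hasDerivAt_exp_neg_mul_abs_rpow (α s : ℝ) {t : ℝ} (ht : t ≠ 0) :
    HasDerivAt (fun t : ℝ ↦ exp (-(s * |t| ^ α)))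
      (-(s * α * SignType.sign t) * (|t| ^ (α - 1) * exp (-(s * |t| ^ α)))) t := by
  have hpow := ((hasDerivAt_abs ht).rpow_const (p := α) (.inl (abs_ne_zero.2 ht))).const_mul s
  refine hpow.fun_neg.exp.congr_deriv ?_
  ring

namespace IsSymmetricStable

variable {ν : Measure ℝ} {α s s' : ℝ} {Ω : Type*} [MeasurableSpace Ω] {μ : Measure Ω}

/-- The derivative off `0` of the characteristic function `exp (-s|t|^α)` of a symmetric stable law;
its value at `0` is `0` since `SignType.sign 0 = 0`. -/
noncomputable def charFunDeriv (α s t : ℝ) : ℂ :=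
  (-(s * α * SignType.sign t) * (|t| ^ (α - 1) * exp (-(s * |t| ^ α))) : ℝ)

lemma hasIntegrableDeriv [IsFiniteMeasure ν] (hν : IsSymmetricStable ν α s) (hα : 0 < α)
    (hs : 0 < s) : HasIntegrableDeriv (charFun ν) (charFunDeriv α s) where
  continuous := continuous_charFun
  integrable := by
    refine ((integrable_abs_rpow_mul_exp_neg_mul_abs_rpow hα hs).bdd_mul (c := |s * α|)
      ?_ (ae_of_all _ fun t ↦ ?_)).ofReal
    · have hsign : Measurable (fun t : ℝ ↦ (SignType.sign t : ℝ)) :=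
        funext deriv_abs ▸ measurable_deriv _
      exact (hsign.const_mul _).neg.aestronglyMeasurable
    · rw [norm_neg, norm_mul, norm_eq_abs]
      refine mul_le_of_le_one_right (abs_nonneg _) ?_
      cases SignType.sign t <;> simp
  hasDerivAt_off_countable := by
    refine ⟨{0}, countable_singleton 0, fun t ht ↦ ?_⟩
    refine (hasDerivAt_exp_neg_mul_abs_rpow α s ht).ofReal_comp.congr_of_eventuallyEq ?_
    exact .of_forall fun t ↦ by simp [hν t]

lemma map_add [IsFiniteMeasure μ] {U V : Ω → ℝ} (hU : AEMeasurable U μ)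
    (hV : AEMeasurable V μ) (hUV : IndepFun U V μ)
    (hUs : IsSymmetricStable (μ.map U) α s) (hVs : IsSymmetricStable (μ.map V) α s') :
    IsSymmetricStable (μ.map (U + V)) α (s + s') := fun t ↦ by
  rw [hUV.charFun_map_add_eq_mul hU hV, Pi.mul_apply, hUs, hVs, ← Complex.exp_add]
  push_cast
  ring_nf

lemma map_const_mul {U : Ω → ℝ} (hU : AEMeasurable U μ)
    (hUs : IsSymmetricStable (μ.map U) α s) (a : ℝ) :
    IsSymmetricStable (μ.map fun ω ↦ a * U ω) α (s * |a| ^ α) := fun t ↦ by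
  rw [charFun_map_mul_comp hU, hUs, abs_mul, mul_rpow (abs_nonneg a) (abs_nonneg t), mul_assoc]

lemma charFunDeriv_mul_charFun (hν : IsSymmetricStable ν α s) (s₀ t : ℝ) (h₀ : s₀ + s ≠ 0) :
    charFunDeriv α s₀ t * charFun ν t = (s₀ / (s₀ + s) : ℝ) * charFunDeriv α (s₀ + s) t := by
  rw [hν t]
  simp only [charFunDeriv]
  norm_cast
  have hexp : exp (-((s₀ + s) * |t| ^ α)) = exp (-(s₀ * |t| ^ α)) * exp (-(s * |t| ^ α)) := by
    rw [← exp_add]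
    ring_nf
  rw [hexp]
  field_simp

lemma map_iff {X : Ω → ℝ} (hX : AEMeasurable X μ) :
    IsSymmetricStable (μ.map X) α s ↔
      ∀ t : ℝ, ∫ ω, Complex.exp ((t * X ω : ℝ) * Complex.I) ∂μ
        = Complex.exp (-(s * |t| ^ α : ℝ)) := by
  refine forall_congr' fun t ↦ ?_
  rw [charFun_apply_real, integral_map hX (by fun_prop)]
  simp only [Complex.ofReal_mul]

variable [IsFiniteMeasure μ] {U V : Ω → ℝ}

theorem ae_integrable_and_integral_condDistrib_add (hα : 0 < α) (hs : 0 < s) (hs' : 0 ≤ s')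
    (hU : Measurable U) (hV : Measurable V) (hUV : IndepFun U V μ)
    (hUs : IsSymmetricStable (μ.map U) α s) (hVs : IsSymmetricStable (μ.map V) α s') :
    ∀ᵐ y ∂μ.map (U + V), Integrable (fun x ↦ x) (condDistrib U (U + V) μ y) ∧
      ∫ x, x ∂condDistrib U (U + V) μ y = s / (s + s') * y := by
  have hss' : 0 < s + s' := by positivity
  have hφ := hUs.hasIntegrableDeriv hα hs
  have hθ := (map_add hU.aemeasurable hV.aemeasurable hUV hUs hVs).hasIntegrableDeriv hα hss'
  exact (ae_integrable_condDistrib hU (hU.add hV) fun K hK ↦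
    integrableOn_preimage_add_of_indepFun hU hV hUV hφ hK).and
      (integral_condDistrib_add_eq_mul hU hV hUV hφ hθ
        (hVs.charFunDeriv_mul_charFun s · hss'.ne'))

end IsSymmetricStable

lemma ae_integrable_and_integral_condDistrib_const_mul
    {Ω F : Type*} [MeasurableSpace Ω] [MeasurableSpace F] {μ : Measure Ω} [IsFiniteMeasure μ]
    {U : Ω → ℝ} {Y : Ω → F} (hU : Measurable U) {m : F → ℝ} (a : ℝ)
    (h : ∀ᵐ y ∂μ.map Y,
      Integrable (fun x ↦ x) (condDistrib U Y μ y) ∧ ∫ x, x ∂condDistrib U Y μ y = m y) :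
    ∀ᵐ y ∂μ.map Y, Integrable (fun x ↦ x) (condDistrib (fun ω ↦ a * U ω) Y μ y) ∧
      ∫ x, x ∂condDistrib (fun ω ↦ a * U ω) Y μ y = a * m y := by
  have hmul : Measurable (fun x : ℝ ↦ a * x) := measurable_const_mul a
  filter_upwards [h, condDistrib_comp (μ := μ) Y hU.aemeasurable hmul] with y ⟨hint, hy⟩ hcomp
  rw [show (fun ω ↦ a * U ω) = (a * ·) ∘ U from rfl, hcomp, Kernel.map_apply _ hmul]
  refine ⟨(integrable_map_measure (by fun_prop) (by fun_prop)).2 (hint.const_mul a), ?_⟩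
  rw [integral_map (by fun_prop) (by fun_prop), integral_const_mul, hy]

theorem additiveNoise_condMean_linear_general
    {Ω : Type*} [MeasurableSpace Ω] {μ : Measure Ω} [IsFiniteMeasure μ] {α s s' a b : ℝ}
    (hα : 0 < α) (hs : 0 < s) (hs' : 0 ≤ s') (ha : a ≠ 0) {X Z : Ω → ℝ}
    (hX : Measurable X) (hZ : Measurable Z) (hXZ : IndepFun X Z μ)
    (hXs : IsSymmetricStable (μ.map X) α s) (hZs : IsSymmetricStable (μ.map Z) α s') :
    ∀ᵐ y ∂μ.map (fun ω ↦ a * X ω + b * Z ω),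
      Integrable (fun x ↦ x) (condDistrib X (fun ω ↦ a * X ω + b * Z ω) μ y) ∧
      ∫ x, x ∂condDistrib X (fun ω ↦ a * X ω + b * Z ω) μ y
        = s * |a| ^ α / (s * |a| ^ α + s' * |b| ^ α) * (y / a) := by
  have haX : Measurable (fun ω ↦ a * X ω) := hX.const_mul a
  have hbZ : Measurable (fun ω ↦ b * Z ω) := hZ.const_mul b
  have hsa : 0 < s * |a| ^ α := by positivity
  have hsb : 0 ≤ s' * |b| ^ α := by positivity
  have hsum := IsSymmetricStable.ae_integrable_and_integral_condDistrib_add hα hsa hsb haX hbZ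
    (hXZ.comp (measurable_const_mul a) (measurable_const_mul b))
    (hXs.map_const_mul hX.aemeasurable a) (hZs.map_const_mul hZ.aemeasurable b)
  have hX_eq : (fun ω ↦ a⁻¹ * (a * X ω)) = X := funext fun ω ↦ inv_mul_cancel_left₀ ha _
  have hscaled := ae_integrable_and_integral_condDistrib_const_mul haX a⁻¹ hsum
  rw [hX_eq] at hscaled
  filter_upwards [hscaled] with y ⟨hint, hy⟩
  refine ⟨hint, hy.trans ?_⟩
  ring

/-- Additive-noise special case: for `Y = a₂₁X + a₂₂Z₂` with `X, Z₂` independent SαS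
variables, the conditional mean of `X` given `Y = y` exists and equals
`(γ_X^α|a₂₁|^α / (γ_X^α|a₂₁|^α + γ_{Z₂}^α|a₂₂|^α)) · (y/a₂₁)`. -/
theorem additiveNoise_condMean_linear
    {Ω : Type*} [MeasurableSpace Ω] {μ : Measure Ω} [IsProbabilityMeasure μ]
    (α γX γZ₂ : ℝ) (hα : α ∈ Set.Ioo (0 : ℝ) 2) (hγX : 0 < γX) (hγZ₂ : 0 < γZ₂)
    (a₂₁ a₂₂ : ℝ) (ha₂₁ : a₂₁ ≠ 0) (ha₂₂ : a₂₂ ≠ 0)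
    (X Z₂ : Ω → ℝ) (hX : Measurable X) (hZ₂ : Measurable Z₂)
    (hindep : IndepFun X Z₂ μ)
    (hcharX : ∀ t : ℝ, ∫ ω, Complex.exp (((t * X ω : ℝ) : ℂ) * Complex.I) ∂μ
      = Complex.exp (-((γX ^ α * |t| ^ α : ℝ) : ℂ)))
    (hcharZ₂ : ∀ t : ℝ, ∫ ω, Complex.exp (((t * Z₂ ω : ℝ) : ℂ) * Complex.I) ∂μ
      = Complex.exp (-((γZ₂ ^ α * |t| ^ α : ℝ) : ℂ)))
    (Y : Ω → ℝ) (hY : Y = fun ω => a₂₁ * X ω + a₂₂ * Z₂ ω) :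
    ∀ᵐ y ∂(μ.map Y),
      Integrable (fun x => x) (condDistrib X Y μ y) ∧
      ∫ x, x ∂(condDistrib X Y μ y)
        = (γX ^ α * |a₂₁| ^ α / (γX ^ α * |a₂₁| ^ α + γZ₂ ^ α * |a₂₂| ^ α)) * (y / a₂₁) := by
  subst hY
  exact additiveNoise_condMean_linear_general hα.1 (rpow_pos_of_pos hγX α)
    (rpow_nonneg hγZ₂.le α) ha₂₁ hX hZ₂ hindep
    ((IsSymmetricStable.map_iff hX.aemeasurable).2 hcharX)
    ((IsSymmetricStable.map_iff hZ₂.aemeasurable).2 hcharZ₂)
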